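/- Let X be a metric space, T : X → X a continuous map, and u ∈ X a point whose orbit {T^n u : n ≥ 0} has compact closure. If the ω-limit set ω(u) is a finite set, then there exist x ∈ ω(u) and an integer k ≥ 0 with T^{k+1} x = x such that ω(u) = {x, T x, …, T^k x}; i.e. every finite ω-limit set is a single periodic orbit. -/

import Mathlib

open Filter Topology

/-- The ω-limit set of `u` under `T`: all limits of convergent subsequences of
the orbit sequence `(T^[n] u)`. -/
def omegaLimitSet {X : Type*} [MetricSpace X] (T : X → X) (u : X) : Set X :=
  {x | ∃ φ : ℕ → ℕ, StrictMono φ ∧ Tendsto (fun n => T^[φ n] u) atTop (𝓝 x)}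

/-!
A finite ω-limit set `W` is mapped into itself by `T`, so by pigeonhole it contains a periodic
orbit `A`. Separate `A` from `W \ A` by disjoint open sets `U ⊇ A` and `V ⊇ W \ A`. By compactness
the orbit of `u` eventually stays in `(U ∩ T⁻¹ U) ∪ V`; but a point of `U ∩ T⁻¹ U` has its image in
`U`, hence not in `V`. So once the orbit enters `U ∩ T⁻¹ U`, which happens because `A ⊆ W`, it can
never leave, and nothing of `W` is left in `V`.
-/

theorem eventually_of_frequently_of_eventually_imp_succ {p : ℕ → Prop}
    (hp : ∃ᶠ n in atTop, p n) (hsucc : ∀ᶠ n in atTop, p n → p (n + 1)) :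
    ∀ᶠ n in atTop, p n := by
  obtain ⟨N, hN⟩ := eventually_atTop.mp hsucc
  obtain ⟨n, hNn, hn⟩ := frequently_atTop.mp hp N
  exact eventually_atTop.mpr
    ⟨n, fun m hnm ↦ Nat.le_induction hn (fun k hnk hk ↦ hN k (hNn.trans hnk) hk) m hnm⟩

section Periodic

open Function

variable {α : Type*} {f : α → α} {x : α}

theorem exists_iterate_mem_periodicPts_of_finite_range
    (h : (Set.range fun n ↦ f^[n] x).Finite) : ∃ m, f^[m] x ∈ periodicPts f := by
  obtain ⟨m, n, hmn, heq⟩ := h.exists_lt_map_eq_of_forall_mem fun n ↦ Set.mem_range_self n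
  refine ⟨m, mk_mem_periodicPts (Nat.sub_pos_of_lt hmn) ?_⟩
  rw [IsPeriodicPt, IsFixedPt, ← iterate_add_apply, Nat.sub_add_cancel hmn.le]
  exact heq.symm

theorem range_iterate_eq_image_Iic_of_isPeriodicPt {k : ℕ} (h : IsPeriodicPt f (k + 1) x) :
    (Set.range fun n ↦ f^[n] x) = (fun n ↦ f^[n] x) '' Set.Iic k := by
  refine Set.Subset.antisymm ?_ (Set.image_subset_range _ _)
  rintro _ ⟨n, rfl⟩
  exact ⟨n % (k + 1), Nat.lt_succ_iff.mp (n.mod_lt k.succ_pos), h.iterate_mod_apply n⟩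

theorem mapsTo_range_iterate (f : α → α) (x : α) :
    Set.MapsTo f (Set.range fun n ↦ f^[n] x) (Set.range fun n ↦ f^[n] x) := by
  rintro _ ⟨n, rfl⟩
  exact ⟨n + 1, iterate_succ_apply' f n x⟩

end Periodic

section OmegaLimit

open scoped omegaLimit

section Absorbing

variable {τ α X : Type*} [TopologicalSpace X] {l : Filter τ} {ϕ : τ → α → X} {a : α} {K : Set X}

theorem nonempty_omegaLimit_singleton_of_frequently_mem (hK : IsCompact K)
    (ha : ∃ᶠ t in l, ϕ t a ∈ K) : (ω l ϕ {a}).Nonempty := by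
  obtain ⟨x, -, hx⟩ := hK.exists_mapClusterPt_of_frequently ha
  exact ⟨x, (mem_omegaLimit_singleton_iff_mapClusterPt ..).mpr hx⟩

theorem eventually_mem_of_omegaLimit_singleton_subset (hK : IsCompact K)
    (ha : ∀ᶠ t in l, ϕ t a ∈ K) {O : Set X} (hO : IsOpen O) (hsub : ω l ϕ {a} ⊆ O) :
    ∀ᶠ t in l, ϕ t a ∈ O := by
  by_contra hOa
  have hKO : ∃ᶠ t in l, ϕ t a ∈ K \ O :=
    ((not_eventually.mp hOa).and_eventually ha).mono fun _ h ↦ h.symm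
  obtain ⟨x, hx, hxa⟩ := (hK.diff hO).exists_mapClusterPt_of_frequently hKO
  exact hx.2 (hsub ((mem_omegaLimit_singleton_iff_mapClusterPt ..).mpr hxa))

end Absorbing

variable {X : Type*} [TopologicalSpace X] {T : X → X} {u : X} {K A : Set X}

theorem map_mem_omegaLimit_iterate {x : X} (hT : ContinuousAt T x)
    (hx : x ∈ ω⁺ (fun n ↦ T^[n]) {u}) : T x ∈ ω⁺ (fun n ↦ T^[n]) {u} := by
  rw [mem_omegaLimit_singleton_iff_mapClusterPt] at hx ⊢
  have hTx : MapClusterPt (T x) atTop fun n ↦ T^[n + 1] u := by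
    simpa only [Function.comp_def, ← Function.iterate_succ_apply'] using hx.continuousAt_comp hT
  exact hTx.of_comp (tendsto_add_atTop_nat 1)

theorem omegaLimit_iterate_subset_of_separatedNhds_diff (hK : IsCompact K)
    (hu : ∀ᶠ n in atTop, T^[n] u ∈ K) (hTA : Set.MapsTo T A A) (hT : ∀ x ∈ A, ContinuousAt T x)
    (hsep : SeparatedNhds A (ω⁺ (fun n ↦ T^[n]) {u} \ A))
    (hmeet : (ω⁺ (fun n ↦ T^[n]) {u} ∩ A).Nonempty) : ω⁺ (fun n ↦ T^[n]) {u} ⊆ A := by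
  obtain ⟨U, V, hU, hV, hAU, hAV, hUV⟩ := hsep
  let O := interior (U ∩ T ⁻¹' U)
  have hOU : O ⊆ U ∩ T ⁻¹' U := interior_subset
  have hAO : A ⊆ O := fun x hx ↦ mem_interior_iff_mem_nhds.mpr <|
    inter_mem (hU.mem_nhds (hAU hx)) ((hT x hx).preimage_mem_nhds (hU.mem_nhds (hAU (hTA hx))))
  have hOV : ∀ᶠ n in atTop, T^[n] u ∈ O ∪ V := by
    refine eventually_mem_of_omegaLimit_singleton_subset hK hu (isOpen_interior.union hV) ?_
    exact (Set.sdiff_subset_iff.mp hAV).trans (Set.union_subset_union_left V hAO)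
  have hstep : ∀ᶠ n in atTop, T^[n] u ∈ O → T^[n + 1] u ∈ O := by
    filter_upwards [(tendsto_add_atTop_nat 1).eventually hOV] with n hn hnO
    refine hn.resolve_right (hUV.notMem_of_mem_left ?_)
    rw [Function.iterate_succ_apply']
    exact (hOU hnO).2
  have henter : ∃ᶠ n in atTop, T^[n] u ∈ O := by
    obtain ⟨a, haω, haA⟩ := hmeet
    rw [mem_omegaLimit_singleton_iff_mapClusterPt] at haω
    exact haω.frequently (isOpen_interior.mem_nhds (hAO haA))
  have hstay : ∀ᶠ n in atTop, T^[n] u ∈ O :=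
    eventually_of_frequently_of_eventually_imp_succ henter hstep
  intro y hy
  by_contra hyA
  have hyV : V ∈ 𝓝 y := hV.mem_nhds (hAV ⟨hy, hyA⟩)
  rw [mem_omegaLimit_singleton_iff_mapClusterPt] at hy
  obtain ⟨n, hnV, hnO⟩ := ((hy.frequently hyV).and_eventually hstay).exists
  exact hUV.notMem_of_mem_left (hOU hnO).1 hnV

theorem finite_omegaLimitSet_is_periodicOrbit_general [T2Space X] (hK : IsCompact K)
    (hu : ∀ᶠ n in atTop, T^[n] u ∈ K) (hT : ∀ x ∈ ω⁺ (fun n ↦ T^[n]) {u}, ContinuousAt T x)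
    (hfin : (ω⁺ (fun n ↦ T^[n]) {u}).Finite) :
    ∃ x ∈ ω⁺ (fun n ↦ T^[n]) {u}, ∃ k : ℕ, T^[k + 1] x = x ∧
      ω⁺ (fun n ↦ T^[n]) {u} = (fun i ↦ T^[i] x) '' Set.Iic k := by
  set W := ω⁺ (fun n ↦ T^[n]) {u}
  have hTW : Set.MapsTo T W W := fun x hx ↦ map_mem_omegaLimit_iterate (hT x hx) hx
  have horbit : ∀ x ∈ W, (Set.range fun n ↦ T^[n] x) ⊆ W := fun x hx ↦
    Set.range_subset_iff.mpr fun n ↦ hTW.iterate n hx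
  obtain ⟨w, hw⟩ : W.Nonempty := nonempty_omegaLimit_singleton_of_frequently_mem hK hu.frequently
  obtain ⟨m, hm⟩ := exists_iterate_mem_periodicPts_of_finite_range (hfin.subset (horbit w hw))
  have hx : T^[m] w ∈ W := hTW.iterate m hw
  generalize T^[m] w = x at hm hx
  obtain ⟨k, hk⟩ := Nat.exists_eq_add_one.mpr (Function.minimalPeriod_pos_of_mem_periodicPts hm)
  have hper : Function.IsPeriodicPt T (k + 1) x := hk ▸ Function.isPeriodicPt_minimalPeriod T x
  refine ⟨x, hx, k, hper, ?_⟩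
  rw [← range_iterate_eq_image_Iic_of_isPeriodicPt hper]
  refine Set.Subset.antisymm ?_ (horbit x hx)
  have hsep : SeparatedNhds (Set.range fun n ↦ T^[n] x) (W \ Set.range fun n ↦ T^[n] x) :=
    .of_isCompact_isCompact (hfin.subset (horbit x hx)).isCompact
      (hfin.subset Set.sdiff_subset).isCompact Set.disjoint_sdiff_right
  exact omegaLimit_iterate_subset_of_separatedNhds_diff hK hu (mapsTo_range_iterate T x)
    (fun y hy ↦ hT y (horbit x hx hy)) hsep ⟨x, hx, 0, rfl⟩

theorem omegaLimitSet_eq_omegaLimit {X : Type*} [MetricSpace X] (T : X → X) (u : X) :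
    omegaLimitSet T u = ω⁺ (fun n ↦ T^[n]) {u} := by
  ext x
  rw [mem_omegaLimit_singleton_iff_mapClusterPt]
  exact ⟨fun ⟨_, hφ, hx⟩ ↦ hx.mapClusterPt.of_comp hφ.tendsto_atTop,
    MapClusterPt.tendsto_subseq⟩

end OmegaLimit

/-- Every finite ω-limit set is a single periodic orbit. -/
theorem finite_omegaLimitSet_is_periodicOrbit {X : Type*} [MetricSpace X]
    (T : X → X) (hT : Continuous T) (u : X)
    (hc : IsCompact (closure (Set.range fun n => T^[n] u)))
    (hfin : (omegaLimitSet T u).Finite) :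
    ∃ x ∈ omegaLimitSet T u, ∃ k : ℕ, T^[k + 1] x = x ∧
      omegaLimitSet T u = (fun i => T^[i] x) '' Set.Iic k := by
  rw [omegaLimitSet_eq_omegaLimit] at hfin ⊢
  exact finite_omegaLimitSet_is_periodicOrbit_general hc
    (.of_forall fun n ↦ subset_closure ⟨n, rfl⟩) (fun _ _ ↦ hT.continuousAt) hfin
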